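/- arXiv:1204.2998 — 3 statements merged into one kernel-verified Lean document; each statement's English description precedes it below -/
import Mathlib

section
/- For any two unit vectors v and w in a complex Hilbert space H with |⟨w, v⟩| = cos θ for some θ ∈ (0, π/2), and any bounded self-adjoint operator A on H with Δ_v A + Δ_w A > 0, the discernability satisfies δ_A := |⟨A⟩_w − ⟨A⟩_v| / (Δ_v A + Δ_w A) ≤ tan θ. -/
open scoped InnerProductSpace

noncomputable def expVal {H : Type*} [NormedAddCommGroup H] [InnerProductSpace ℂ H]
    (A : H →L[ℂ] H) (v : H) : ℝ := (⟪v, A v⟫_ℂ).re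

noncomputable def uncert {H : Type*} [NormedAddCommGroup H] [InnerProductSpace ℂ H]
    (A : H →L[ℂ] H) (v : H) : ℝ :=
  Real.sqrt ((⟪v, A (A v)⟫_ℂ).re - (expVal A v) ^ 2)

noncomputable def discern {H : Type*} [NormedAddCommGroup H] [InnerProductSpace ℂ H]
    (A : H →L[ℂ] H) (v w : H) : ℝ :=
  |expVal A w - expVal A v| / (uncert A v + uncert A w)

theorem aux_expVal {H : Type*} [NormedAddCommGroup H]
    [InnerProductSpace ℂ H] [CompleteSpace H] (v : H)
    (A : H →L[ℂ] H) (hA : IsSelfAdjoint A) : ⟪v, A v⟫_ℂ = (expVal A v : ℂ) := by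
  have h : ⟪A v, v⟫_ℂ = ⟪v, A v⟫_ℂ := hA.isSymmetric v v
  have h2 : (starRingEnd ℂ) ⟪v, A v⟫_ℂ = ⟪v, A v⟫_ℂ := by
    rw [inner_conj_symm]; exact h
  exact (Complex.conj_eq_iff_re.1 h2).symm

theorem aux_orth {H : Type*} [NormedAddCommGroup H]
    [InnerProductSpace ℂ H] [CompleteSpace H] (v : H) (hv : ‖v‖ = 1)
    (A : H →L[ℂ] H) (hA : IsSelfAdjoint A) :
    ⟪v, A v - (expVal A v : ℂ) • v⟫_ℂ = 0 := by
  rw [inner_sub_right, inner_smul_right, aux_expVal v A hA, inner_self_eq_norm_sq_to_K, hv]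
  simp

theorem aux_uncert {H : Type*} [NormedAddCommGroup H]
    [InnerProductSpace ℂ H] [CompleteSpace H] (v : H) (hv : ‖v‖ = 1)
    (A : H →L[ℂ] H) (hA : IsSelfAdjoint A) :
    ‖A v - (expVal A v : ℂ) • v‖ = uncert A v := by
  have h : ⟪A v, A v⟫_ℂ = ⟪v, A (A v)⟫_ℂ := hA.isSymmetric v (A v)
  have h1 : ⟪A v, v⟫_ℂ = ⟪v, A v⟫_ℂ := hA.isSymmetric v v
  have hn : ‖A v - (expVal A v : ℂ) • v‖ ^ 2 = (⟪v, A (A v)⟫_ℂ).re - (expVal A v) ^ 2 := by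
    rw [@norm_sub_sq ℂ, inner_smul_right, norm_smul, hv, h1, aux_expVal v A hA, ← h,
      inner_self_eq_norm_sq_to_K, Complex.norm_real, Real.norm_eq_abs, mul_one, sq_abs]
    norm_cast
    simp only [Complex.coe_algebraMap, RCLike.re_to_complex]
    norm_cast
    ring
  unfold uncert
  rw [← hn, Real.sqrt_sq (norm_nonneg _)]

theorem aux_cs {H : Type*} [NormedAddCommGroup H]
    [InnerProductSpace ℂ H] (v w x : H) (hv : ‖v‖ = 1) (hw : ‖w‖ = 1) (s : ℝ) (hs : 0 ≤ s)
    (hsc : s ^ 2 = 1 - ‖⟪w, v⟫_ℂ‖ ^ 2) (hx : ⟪v, x⟫_ℂ = 0) : ‖⟪w, x⟫_ℂ‖ ≤ s * ‖x‖ := by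
  have e : ⟪w - ⟪v, w⟫_ℂ • v, x⟫_ℂ = ⟪w, x⟫_ℂ := by
    rw [inner_sub_left, inner_smul_left, hx]; simp
  have n : ‖w - ⟪v, w⟫_ℂ • v‖ ^ 2 = s ^ 2 := by
    rw [@norm_sub_sq ℂ, inner_smul_right, norm_smul, hv, hw, hsc, norm_inner_symm v w,
      ← inner_conj_symm v w, RCLike.conj_mul]
    norm_cast
    ring
  have n' : ‖w - ⟪v, w⟫_ℂ • v‖ = s := (sq_eq_sq₀ (norm_nonneg _) hs).1 n
  rw [← e, ← n']
  exact norm_inner_le_norm _ _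

theorem discern_le_tan {H : Type*} [NormedAddCommGroup H]
    [InnerProductSpace ℂ H] [CompleteSpace H] (v w : H) (hv : ‖v‖ = 1) (hw : ‖w‖ = 1)
    (θ : ℝ) (hθ : θ ∈ Set.Ioo 0 (Real.pi / 2)) (hcos : ‖⟪w, v⟫_ℂ‖ = Real.cos θ)
    (A : H →L[ℂ] H) (hA : IsSelfAdjoint A) (hΔ : 0 < uncert A v + uncert A w) :
    discern A v w ≤ Real.tan θ := by
  have hc : 0 < Real.cos θ := Real.cos_pos_of_mem_Ioo ⟨by linarith [hθ.1, Real.pi_pos], hθ.2⟩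
  have hs : 0 ≤ Real.sin θ :=
    Real.sin_nonneg_of_nonneg_of_le_pi hθ.1.le (by linarith [hθ.2, Real.pi_pos])
  have h1 := aux_cs v w (A v - (expVal A v : ℂ) • v) hv hw (Real.sin θ) hs
    (by rw [hcos, Real.sin_sq]) (aux_orth v hv A hA)
  have h2 := aux_cs w v (A w - (expVal A w : ℂ) • w) hw hv (Real.sin θ) hs
    (by rw [norm_inner_symm, hcos, Real.sin_sq]) (aux_orth w hw A hA)
  rw [aux_uncert v hv A hA] at h1
  rw [aux_uncert w hw A hA, norm_inner_symm] at h2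
  have hsym : ⟪A w, v⟫_ℂ = ⟪w, A v⟫_ℂ := hA.isSymmetric w v
  have key : ((expVal A w - expVal A v : ℝ) : ℂ) * ⟪w, v⟫_ℂ =
      ⟪w, A v - (expVal A v : ℂ) • v⟫_ℂ - ⟪A w - (expVal A w : ℂ) • w, v⟫_ℂ := by
    rw [inner_sub_right, inner_sub_left, inner_smul_right, inner_smul_left, hsym,
      Complex.conj_ofReal]
    push_cast
    ring
  have k2 := congrArg norm key
  rw [norm_mul, hcos, Complex.norm_real, Real.norm_eq_abs] at k2
  have k3 := norm_sub_le ⟪w, A v - (expVal A v : ℂ) • v⟫_ℂ ⟪A w - (expVal A w : ℂ) • w, v⟫_ℂ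
  unfold discern
  rw [Real.tan_eq_sin_div_cos, div_le_div_iff₀ hΔ hc]
  linarith
end

section
/- Saturation of Fleming's quantum master inequality (necessity): let v and w be linearly independent unit vectors in a complex Hilbert space H with |⟨w, v⟩| = cos θ for some θ ∈ (0, π/2], and let A be a bounded self-adjoint operator on H. If |⟨A⟩_w − ⟨A⟩_v| · cos θ = (Δ_v A + Δ_w A) · sin θ, then (i) A maps the subspace ℂ·v + ℂ·w into itself, and (ii) there exists a real number λ with min{⟨A⟩_v, ⟨A⟩_w} ≤ λ ≤ max{⟨A⟩_v, ⟨A⟩_w} such that ⟨w, A v⟩ = λ · ⟨w, v⟩. -/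
open scoped InnerProductSpace

lemma aux_cs_s7 {H : Type*} [NormedAddCommGroup H] [InnerProductSpace ℂ H] (v w p : H)
    (hv : ‖v‖ = 1) (hw : ‖w‖ = 1) (θ : ℝ) (hs : 0 < Real.sin θ)
    (hcos : ‖⟪w, v⟫_ℂ‖ = Real.cos θ) (hp : ⟪v, p⟫_ℂ = 0) :
    ‖⟪w, p⟫_ℂ‖ ≤ Real.sin θ * ‖p‖ ∧
    (‖⟪w, p⟫_ℂ‖ = Real.sin θ * ‖p‖ → p ∈ Submodule.span ℂ ({v, w} : Set H)) := by
  set u : H := w - ⟪v, w⟫_ℂ • v with hu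
  have h1 : ⟪w, p⟫_ℂ = ⟪u, p⟫_ℂ := by
    rw [hu, inner_sub_left, inner_smul_left, hp]; simp
  have hvu : ⟪⟪v, w⟫_ℂ • v, u⟫_ℂ = 0 := by
    rw [hu, inner_smul_left, inner_sub_right, inner_smul_right, inner_self_eq_norm_sq_to_K, hv]
    simp
  have h2 : ‖u‖ = Real.sin θ := by
    have h3 := norm_add_sq_eq_norm_sq_add_norm_sq_of_inner_eq_zero _ _ hvu
    have h4 : ⟪v, w⟫_ℂ • v + u = w := by rw [hu]; abel
    rw [h4, hw, norm_smul, hv, norm_inner_symm, hcos] at h3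
    have h5 := Real.sin_sq_add_cos_sq θ
    have : ‖u‖ ^ 2 = Real.sin θ ^ 2 := by nlinarith
    exact (sq_eq_sq₀ (norm_nonneg _) hs.le).1 this
  rw [h1, ← h2]
  refine ⟨norm_inner_le_norm _ _, fun h => ?_⟩
  by_cases hp0 : p = 0
  · rw [hp0]; exact Submodule.zero_mem _
  have hu0 : u ≠ 0 := by
    intro h0; rw [h0, norm_zero] at h2; linarith
  have h6 : ‖⟪u, p⟫_ℂ / ((‖u‖ : ℂ) * ‖p‖)‖ = 1 := by
    rw [norm_div, h]
    simp [hu0, hp0]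
  obtain ⟨-, r, -, hr⟩ := (norm_inner_div_norm_mul_norm_eq_one_iff u p).1 h6
  rw [hr, hu]
  have mv : v ∈ Submodule.span ℂ ({v, w} : Set H) := Submodule.subset_span (by simp)
  have mw : w ∈ Submodule.span ℂ ({v, w} : Set H) := Submodule.subset_span (by simp)
  exact Submodule.smul_mem _ _ (Submodule.sub_mem _ mw (Submodule.smul_mem _ _ mv))

lemma aux_exp {H : Type*} [NormedAddCommGroup H] [InnerProductSpace ℂ H] [CompleteSpace H]
    (v : H) (hv : ‖v‖ = 1) (A : H →L[ℂ] H) (hA : IsSelfAdjoint A) :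
    ⟪v, A v - (expVal A v : ℂ) • v⟫_ℂ = 0 ∧ ‖A v - (expVal A v : ℂ) • v‖ = uncert A v := by
  have hs : ∀ x y, ⟪A x, y⟫_ℂ = ⟪x, A y⟫_ℂ := hA.isSymmetric
  have him : ⟪v, A v⟫_ℂ = (expVal A v : ℂ) := by
    have h := inner_conj_symm (𝕜 := ℂ) v (A v)
    rw [hs] at h
    exact (Complex.conj_eq_iff_re.1 h).symm
  have h0 : ⟪v, A v - (expVal A v : ℂ) • v⟫_ℂ = 0 := by
    rw [inner_sub_right, inner_smul_right, inner_self_eq_norm_sq_to_K, hv, him]; simp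
  refine ⟨h0, ?_⟩
  have h1 : ⟪(expVal A v : ℂ) • v, A v - (expVal A v : ℂ) • v⟫_ℂ = 0 := by
    rw [inner_smul_left, h0, mul_zero]
  have h3 := norm_add_sq_eq_norm_sq_add_norm_sq_of_inner_eq_zero _ _ h1
  rw [add_sub_cancel, norm_smul, hv] at h3
  have h4 : ‖A v‖ * ‖A v‖ = (⟪v, A (A v)⟫_ℂ).re := by
    rw [← hs, inner_self_eq_norm_sq_to_K, ← sq]; norm_cast
  have h5 : ‖((expVal A v : ℝ) : ℂ)‖ ^ 2 = expVal A v ^ 2 := by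
    rw [Complex.norm_real, Real.norm_eq_abs, sq_abs]
  have h6 : (⟪v, A (A v)⟫_ℂ).re - expVal A v ^ 2 = ‖A v - (expVal A v : ℂ) • v‖ ^ 2 := by
    nlinarith
  rw [uncert, h6, Real.sqrt_sq (norm_nonneg _)]

/-- Saturation of Fleming's quantum master inequality: necessity of the two conditions. -/
theorem qmie_saturation_necessary {H : Type*} [NormedAddCommGroup H]
    [InnerProductSpace ℂ H] [CompleteSpace H] (v w : H) (hv : ‖v‖ = 1) (hw : ‖w‖ = 1)
    (hli : LinearIndependent ℂ ![v, w])
    (θ : ℝ) (hθ : 0 < θ ∧ θ ≤ Real.pi / 2) (hcos : ‖⟪w, v⟫_ℂ‖ = Real.cos θ)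
    (A : H →L[ℂ] H) (hA : IsSelfAdjoint A)
    (hsat : |expVal A w - expVal A v| * Real.cos θ =
      (uncert A v + uncert A w) * Real.sin θ) :
    (∀ x ∈ Submodule.span ℂ ({v, w} : Set H), A x ∈ Submodule.span ℂ ({v, w} : Set H)) ∧
      ∃ l : ℝ, min (expVal A v) (expVal A w) ≤ l ∧ l ≤ max (expVal A v) (expVal A w) ∧
        ⟪w, A v⟫_ℂ = (l : ℂ) * ⟪w, v⟫_ℂ := by
  have hs : 0 < Real.sin θ :=
    Real.sin_pos_of_pos_of_lt_pi hθ.1 (by linarith [Real.pi_pos])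
  have hsym : ∀ x y, ⟪A x, y⟫_ℂ = ⟪x, A y⟫_ℂ := hA.isSymmetric
  obtain ⟨hp, hpn⟩ := aux_exp v hv A hA
  obtain ⟨hq, hqn⟩ := aux_exp w hw A hA
  generalize expVal A v = a at *
  generalize expVal A w = b at *
  rw [← hpn, ← hqn] at hsat
  obtain ⟨p1, p2⟩ := aux_cs_s7 v w _ hv hw θ hs hcos hp
  obtain ⟨q1, q2⟩ := aux_cs_s7 w v _ hw hv θ hs (by rw [norm_inner_symm, hcos]) hq
  rw [norm_inner_symm] at q1 q2
  have hx : ⟪w, A v⟫_ℂ = a * ⟪w, v⟫_ℂ + ⟪w, A v - (a : ℂ) • v⟫_ℂ := by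
    rw [inner_sub_right, inner_smul_right]; ring
  have hy : ⟪w, A v⟫_ℂ = b * ⟪w, v⟫_ℂ + ⟪A w - (b : ℂ) • w, v⟫_ℂ := by
    rw [inner_sub_left, inner_smul_left, hsym]; simp
  have mv : v ∈ Submodule.span ℂ ({v, w} : Set H) := Submodule.subset_span (by simp)
  have mw : w ∈ Submodule.span ℂ ({v, w} : Set H) := Submodule.subset_span (by simp)
  rw [Set.pair_comm w v] at q2
  generalize hP : A v - (a : ℂ) • v = P at *
  generalize hQ : A w - (b : ℂ) • w = Q at *
  have hxy : ⟪w, P⟫_ℂ + -⟪Q, v⟫_ℂ = ((b - a : ℝ) : ℂ) * ⟪w, v⟫_ℂ := by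
    push_cast
    linear_combination hy - hx
  have hn : ‖⟪w, P⟫_ℂ + -⟪Q, v⟫_ℂ‖ = (‖P‖ + ‖Q‖) * Real.sin θ := by
    rw [hxy, norm_mul, hcos, Complex.norm_real, Real.norm_eq_abs, hsat]
  have ht := norm_add_le ⟪w, P⟫_ℂ (-⟪Q, v⟫_ℂ)
  have hneg : ‖-⟪Q, v⟫_ℂ‖ = ‖⟪Q, v⟫_ℂ‖ := norm_neg _
  constructor
  · have P2 := p2 (by nlinarith)
    have Q2 := q2 (by nlinarith)
    have av : A v ∈ Submodule.span ℂ ({v, w} : Set H) := by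
      rw [← sub_add_cancel (A v) ((a : ℂ) • v), hP]
      exact Submodule.add_mem _ P2 (Submodule.smul_mem _ _ mv)
    have aw : A w ∈ Submodule.span ℂ ({v, w} : Set H) := by
      rw [← sub_add_cancel (A w) ((b : ℂ) • w), hQ]
      exact Submodule.add_mem _ Q2 (Submodule.smul_mem _ _ mw)
    intro x hx
    obtain ⟨c, d, rfl⟩ := Submodule.mem_span_pair.1 hx
    rw [map_add, map_smul, map_smul]
    exact Submodule.add_mem _ (Submodule.smul_mem _ _ av) (Submodule.smul_mem _ _ aw)
  · have hray : SameRay ℝ ⟪w, P⟫_ℂ (-⟪Q, v⟫_ℂ) := by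
      rw [sameRay_iff_norm_add]; nlinarith
    obtain ⟨s, t, hs0, ht0, hst, h1, -⟩ := hray.exists_eq_smul_add
    have ht' : t = 1 - s := by linarith
    refine ⟨a + s * (b - a), ?_, ?_, ?_⟩
    · rcases le_total a b with h | h
      · rw [min_eq_left h]; nlinarith
      · rw [min_eq_right h]; nlinarith
    · rcases le_total a b with h | h
      · rw [max_eq_right h]; nlinarith
      · rw [max_eq_left h]; nlinarith
    · rw [hxy, Complex.real_smul] at h1
      rw [hx, h1]; push_cast; ring
end

section
/- Squared form of the quantum master inequality: for any two unit vectors v and w in a complex Hilbert space H with |⟨w, v⟩| = cos θ, θ ∈ [0, π/2], and any bounded self-adjoint operator A on H, one has [(⟨A⟩_w − ⟨A⟩_v)² + (Δ_v A + Δ_w A)²] · cos²θ ≤ (Δ_v A + Δ_w A)². -/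
open scoped InnerProductSpace

lemma aux_inner {H : Type*} [NormedAddCommGroup H] [InnerProductSpace ℂ H] (v w x : H)
    (hv : ‖v‖ = 1) (hw : ‖w‖ = 1) (hx : ⟪v, x⟫_ℂ = 0) (θ : ℝ)
    (hs : 0 ≤ Real.sin θ) (hc : ‖⟪v, w⟫_ℂ‖ = Real.cos θ) :
    ‖⟪w, x⟫_ℂ‖ ≤ Real.sin θ * ‖x‖ := by
  have hvv : ⟪v, v⟫_ℂ = 1 := by rw [inner_self_eq_norm_sq_to_K, hv]; simp
  obtain ⟨u, hu⟩ : ∃ u, u = w - ⟪v, w⟫_ℂ • v := ⟨_, rfl⟩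
  have h1 : ⟪w, x⟫_ℂ = ⟪u, x⟫_ℂ := by
    rw [hu, inner_sub_left, inner_smul_left, hx]; simp
  have hvu : ⟪⟪v, w⟫_ℂ • v, u⟫_ℂ = 0 := by
    rw [hu, inner_smul_left, inner_sub_right, inner_smul_right, hvv]; simp
  have hp := norm_add_sq_eq_norm_sq_add_norm_sq_of_inner_eq_zero _ _ hvu
  have h2 : ⟪v, w⟫_ℂ • v + u = w := by rw [hu]; abel
  rw [h2, norm_smul, hc, hv, hw] at hp
  have h3 : ‖u‖ ≤ Real.sin θ := by
    apply abs_le_of_sq_le_sq' _ hs |>.2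
    nlinarith [Real.sin_sq_add_cos_sq θ]
  rw [h1]
  exact (norm_inner_le_norm u x).trans (by gcongr)

lemma aux_unc {H : Type*} [NormedAddCommGroup H] [InnerProductSpace ℂ H] [CompleteSpace H]
    (v : H) (hv : ‖v‖ = 1) (A : H →L[ℂ] H) (hA : IsSelfAdjoint A) :
    ⟪v, A v - (expVal A v : ℂ) • v⟫_ℂ = 0 ∧ uncert A v = ‖A v - (expVal A v : ℂ) • v‖ := by
  have hs : ∀ x y, ⟪A x, y⟫_ℂ = ⟪x, A y⟫_ℂ := hA.isSymmetric
  have hvv : ⟪v, v⟫_ℂ = 1 := by rw [inner_self_eq_norm_sq_to_K, hv]; simp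
  have he : ⟪v, A v⟫_ℂ = (expVal A v : ℂ) := by
    have : (starRingEnd ℂ) ⟪v, A v⟫_ℂ = ⟪v, A v⟫_ℂ := by rw [inner_conj_symm, hs]
    exact (Complex.conj_eq_iff_re.1 this).symm
  have h0 : ⟪v, A v - (expVal A v : ℂ) • v⟫_ℂ = 0 := by
    rw [inner_sub_right, inner_smul_right, hvv, he]; simp
  refine ⟨h0, ?_⟩
  have h1 : ⟪A v - (expVal A v : ℂ) • v, A v - (expVal A v : ℂ) • v⟫_ℂ
      = ⟪v, A (A v)⟫_ℂ - (expVal A v : ℂ) ^ 2 := by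
    conv_lhs => rw [inner_sub_left, inner_smul_left, h0]
    rw [inner_sub_right, inner_smul_right, hs, hs, he]
    ring
  have h2 : ‖A v - (expVal A v : ℂ) • v‖ ^ 2 = (⟪v, A (A v)⟫_ℂ).re - expVal A v ^ 2 := by
    rw [inner_self_eq_norm_sq_to_K] at h1
    have := congrArg Complex.re h1
    rw [Complex.sub_re] at this
    exact_mod_cast this
  rw [uncert, ← h2, Real.sqrt_sq (norm_nonneg _)]

/-- Squared form of Fleming's quantum master inequality. -/
theorem qmie_squared {H : Type*} [NormedAddCommGroup H]
    [InnerProductSpace ℂ H] [CompleteSpace H] (v w : H) (hv : ‖v‖ = 1) (hw : ‖w‖ = 1)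
    (θ : ℝ) (hθ : θ ∈ Set.Icc 0 (Real.pi / 2)) (hcos : ‖⟪w, v⟫_ℂ‖ = Real.cos θ)
    (A : H →L[ℂ] H) (hA : IsSelfAdjoint A) :
    ((expVal A w - expVal A v) ^ 2 + (uncert A v + uncert A w) ^ 2) * Real.cos θ ^ 2 ≤
      (uncert A v + uncert A w) ^ 2 := by
  have hs : 0 ≤ Real.sin θ :=
    Real.sin_nonneg_of_nonneg_of_le_pi hθ.1 (by linarith [hθ.2, Real.pi_pos])
  obtain ⟨hv0, hv1⟩ := aux_unc v hv A hA
  obtain ⟨hw0, hw1⟩ := aux_unc w hw A hA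
  have i1 := aux_inner v w _ hv hw hv0 θ hs (by rw [norm_inner_symm, hcos])
  have i2 := aux_inner w v _ hw hv hw0 θ hs hcos
  rw [norm_inner_symm] at i2
  rw [← hv1] at i1
  rw [← hw1] at i2
  have hsym : ⟪A w, v⟫_ℂ = ⟪w, A v⟫_ℂ := hA.isSymmetric w v
  have key : ((expVal A w - expVal A v : ℝ) : ℂ) * ⟪w, v⟫_ℂ =
      ⟪w, A v - (expVal A v : ℂ) • v⟫_ℂ - ⟪A w - (expVal A w : ℂ) • w, v⟫_ℂ := by
    rw [inner_sub_left, inner_sub_right, inner_smul_left, inner_smul_right, hsym,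
      Complex.conj_ofReal]
    push_cast; ring
  have hn := congrArg norm key
  rw [norm_mul, hcos, Complex.norm_real, Real.norm_eq_abs] at hn
  have h4 : |expVal A w - expVal A v| * Real.cos θ
      ≤ Real.sin θ * (uncert A v + uncert A w) := by
    rw [hn]
    refine (norm_sub_le _ _).trans ?_
    linarith
  have hc0 : 0 ≤ Real.cos θ := hcos ▸ norm_nonneg _
  have h5 := pow_le_pow_left₀ (by positivity) h4 2
  rw [mul_pow, mul_pow, sq_abs, Real.sin_sq] at h5
  linarith
end
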